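/- Let X be a set, 𝒞 a finite set of classes with at least two elements, and ρ > 0. Let S and T be probability distributions on X × 𝒞 with X-marginals S_X and T_X (all integrands measurable). Then for any two scoring functions f, f* : X × 𝒞 → ℝ: err_T(f) ≤ err_S^{(ρ)}(f) + err_S^{(ρ)}(f*) − disp_{S_X}^{(ρ)}(f*, f) + disp_{T_X}^{(ρ)}(f*, f) + err_T^{(ρ)}(f*). -/

import Mathlib

open MeasureTheory Real

/-- Ramp function `Φ^ρ`. -/
noncomputable def ramp (ρ t : ℝ) : ℝ := if t < 0 then 1 else if t ≤ ρ then 1 - t / ρ else 0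

/-- Margin `ρ_f(x,c) = f(x,c) − max_{c'≠c} f(x,c')`. -/
noncomputable def margin {X C : Type*} [Fintype C] [DecidableEq C] [Nontrivial C]
    (f : X × C → ℝ) (x : X) (c : C) : ℝ :=
  f (x, c) - (Finset.univ.erase c).sup'
    (by obtain ⟨b, hb⟩ := exists_ne c
        exact ⟨b, Finset.mem_erase.2 ⟨hb, Finset.mem_univ b⟩⟩)
    (fun c' => f (x, c'))

/-!
Pointwise, the margin losses of `f*` at two distinct labels sum to at least `1`, since one of the
two margins is nonpositive; taking the labels `h_f(x)` and `y` bounds `err_T(f)` by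
`disp_T(f*, f) + err_T(f*)`. On the source, `f*` pays the same at `h_f(x)` and `y` when they agree,
and otherwise `f` has a nonpositive margin at `y`, hence full loss there; this bounds
`disp_S(f*, f)` by `err_S(f) + err_S(f*)`. The theorem is the sum of the two bounds.
-/

theorem ramp_nonneg (ρ t : ℝ) : 0 ≤ ramp ρ t := by
  unfold ramp
  split_ifs with ht htρ
  · exact zero_le_one
  · exact sub_nonneg.2 (div_le_one_of_le₀ htρ ((not_lt.1 ht).trans htρ))
  · exact le_rfl

theorem ramp_le_one (ρ t : ℝ) : ramp ρ t ≤ 1 := by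
  unfold ramp
  split_ifs with ht htρ
  · exact le_rfl
  · have ht₀ : 0 ≤ t := not_lt.1 ht
    exact sub_le_self 1 (div_nonneg ht₀ (ht₀.trans htρ))
  · exact zero_le_one

theorem ramp_eq_one_of_nonpos {ρ t : ℝ} (hρ : 0 ≤ ρ) (ht : t ≤ 0) : ramp ρ t = 1 := by
  rcases ht.lt_or_eq with ht | rfl
  · simp [ramp, ht]
  · simp [ramp, hρ]

section Margin

variable {X C : Type*} [Fintype C] [DecidableEq C] [Nontrivial C]
  {ρ : ℝ} {f : X × C → ℝ} {x : X} {c d : C}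

theorem margin_nonpos_of_le (hcd : c ≠ d) (hf : f (x, c) ≤ f (x, d)) : margin f x c ≤ 0 :=
  sub_nonpos.2 <| hf.trans <| Finset.le_sup' (fun c' => f (x, c')) <|
    Finset.mem_erase.2 ⟨hcd.symm, Finset.mem_univ d⟩

theorem margin_nonpos_or_margin_nonpos (f : X × C → ℝ) (x : X) (hcd : c ≠ d) :
    margin f x c ≤ 0 ∨ margin f x d ≤ 0 :=
  (le_total (f (x, c)) (f (x, d))).imp (margin_nonpos_of_le hcd) (margin_nonpos_of_le hcd.symm)

theorem one_le_ramp_margin_add_ramp_margin (hρ : 0 ≤ ρ) (f : X × C → ℝ) (x : X) (hcd : c ≠ d) :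
    1 ≤ ramp ρ (margin f x c) + ramp ρ (margin f x d) := by
  rcases margin_nonpos_or_margin_nonpos f x hcd with hc | hd
  · rw [ramp_eq_one_of_nonpos hρ hc]
    exact le_add_of_nonneg_right (ramp_nonneg _ _)
  · rw [ramp_eq_one_of_nonpos hρ hd]
    exact le_add_of_nonneg_left (ramp_nonneg _ _)

theorem ramp_margin_le_ramp_margin_add_ramp_margin (hρ : 0 ≤ ρ) (g : X × C → ℝ)
    (hf : f (x, c) ≤ f (x, d)) :
    ramp ρ (margin g x d) ≤ ramp ρ (margin f x c) + ramp ρ (margin g x c) := by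
  rcases eq_or_ne c d with rfl | hcd
  · exact le_add_of_nonneg_left (ramp_nonneg _ _)
  · rw [ramp_eq_one_of_nonpos hρ (margin_nonpos_of_le hcd hf)]
    exact (ramp_le_one _ _).trans (le_add_of_nonneg_right (ramp_nonneg _ _))

end Margin

section Risk

variable {X C : Type*} [MeasurableSpace X] [Fintype C] [DecidableEq C] [Nontrivial C]

/-- The margin error `err_D^{(ρ)}(f)` of a scoring function on labelled data. -/
noncomputable def marginError [MeasurableSpace C] (ρ : ℝ) (D : Measure (X × C))
    (f : X × C → ℝ) : ℝ :=
  ∫ p, ramp ρ (margin f p.1 p.2) ∂D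

/-- The margin disparity `disp_D^{(ρ)}(f', f)` on unlabelled data. It depends on `f` only through
its classifier `h_f`, so it is defined for an arbitrary classifier `h`. -/
noncomputable def marginDisparity (ρ : ℝ) (D : Measure X) (f' : X × C → ℝ) (h : X → C) : ℝ :=
  ∫ x, ramp ρ (margin f' x (h x)) ∂D

variable [MeasurableSpace C] {ρ : ℝ} {D S T : Measure (X × C)} {f g : X × C → ℝ} {h : X → C}

theorem marginDisparity_map_fst
    (hdisp : AEStronglyMeasurable (fun x => ramp ρ (margin g x (h x))) (D.map Prod.fst)) :
    marginDisparity ρ (D.map Prod.fst) g h = ∫ p, ramp ρ (margin g p.1 (h p.1)) ∂D :=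
  integral_map measurable_fst.aemeasurable hdisp

theorem marginDisparity_le_marginError_add_marginError (hρ : 0 ≤ ρ)
    (hmax : ∀ x c, f (x, c) ≤ f (x, h x))
    (herrf : Integrable (fun p => ramp ρ (margin f p.1 p.2)) D)
    (herrg : Integrable (fun p => ramp ρ (margin g p.1 p.2)) D)
    (hdisp : Integrable (fun x => ramp ρ (margin g x (h x))) (D.map Prod.fst)) :
    marginDisparity ρ (D.map Prod.fst) g h ≤ marginError ρ D f + marginError ρ D g := by
  rw [marginDisparity_map_fst hdisp.aestronglyMeasurable, marginError, marginError,
    ← integral_add herrf herrg]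
  exact integral_mono (hdisp.comp_measurable measurable_fst) (herrf.add herrg) fun p =>
    ramp_margin_le_ramp_margin_add_ramp_margin hρ g (hmax p.1 p.2)

theorem measureReal_misclassified_le_marginDisparity_add_marginError (hρ : 0 ≤ ρ)
    (herr : Integrable (fun p => ramp ρ (margin g p.1 p.2)) D)
    (hdisp : Integrable (fun x => ramp ρ (margin g x (h x))) (D.map Prod.fst)) :
    D.real {p | h p.1 ≠ p.2} ≤ marginDisparity ρ (D.map Prod.fst) g h + marginError ρ D g := by
  have hdisp' : Integrable (fun p : X × C => ramp ρ (margin g p.1 (h p.1))) D :=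
    hdisp.comp_measurable measurable_fst
  have hnonneg (p : X × C) :
      0 ≤ ramp ρ (margin g p.1 (h p.1)) + ramp ρ (margin g p.1 p.2) :=
    add_nonneg (ramp_nonneg _ _) (ramp_nonneg _ _)
  rw [marginDisparity_map_fst hdisp.aestronglyMeasurable, marginError,
    ← integral_add hdisp' herr]
  refine ENNReal.toReal_le_of_le_ofReal (integral_nonneg hnonneg) ?_
  exact (hdisp'.add herr).measure_le_integral (.of_forall hnonneg) fun p hp =>
    one_le_ramp_margin_add_ramp_margin hρ g p.1 hp

theorem stmt5_general (hρ : 0 < ρ) (hmax : ∀ x c, f (x, c) ≤ f (x, h x))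
    (herrSf : Integrable (fun p => ramp ρ (margin f p.1 p.2)) S)
    (herrSg : Integrable (fun p => ramp ρ (margin g p.1 p.2)) S)
    (herrTg : Integrable (fun p => ramp ρ (margin g p.1 p.2)) T)
    (hdispS : Integrable (fun x => ramp ρ (margin g x (h x))) (S.map Prod.fst))
    (hdispT : Integrable (fun x => ramp ρ (margin g x (h x))) (T.map Prod.fst)) :
    T.real {p | h p.1 ≠ p.2} ≤
      marginError ρ S f + marginError ρ S g - marginDisparity ρ (S.map Prod.fst) g h
        + marginDisparity ρ (T.map Prod.fst) g h + marginError ρ T g := by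
  have source := marginDisparity_le_marginError_add_marginError hρ.le hmax herrSf herrSg hdispS
  have target := measureReal_misclassified_le_marginDisparity_add_marginError hρ.le herrTg hdispT
  linarith

end Risk

/-- `err_T(f) ≤ err_S^{(ρ)}(f) + err_S^{(ρ)}(f*) − disp_{S_X}^{(ρ)}(f*, f)
  + disp_{T_X}^{(ρ)}(f*, f) + err_T^{(ρ)}(f*)`,
where `am` is the fixed argmax tie-breaking rule inducing the classifier `h_f = am f`. -/
theorem stmt5 {X C : Type*} [MeasurableSpace X] [MeasurableSpace C]
    [Fintype C] [DecidableEq C] [Nontrivial C]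
    (ρ : ℝ) (hρ : 0 < ρ)
    (am : (X × C → ℝ) → X → C)
    (ham : ∀ g : X × C → ℝ, ∀ x : X, ∀ c : C, g (x, c) ≤ g (x, am g x))
    (S T : Measure (X × C)) [IsProbabilityMeasure S] [IsProbabilityMeasure T]
    (f fstar : X × C → ℝ)
    -- all integrands measurable (hence integrable, being `[0,1]`-valued)
    (hmeasT : MeasurableSet {p : X × C | am f p.1 ≠ p.2})
    (herrSf : Integrable (fun p => ramp ρ (margin f p.1 p.2)) S)
    (herrSstar : Integrable (fun p => ramp ρ (margin fstar p.1 p.2)) S)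
    (herrTstar : Integrable (fun p => ramp ρ (margin fstar p.1 p.2)) T)
    (hdispS : Integrable (fun x => ramp ρ (margin fstar x (am f x))) (S.map Prod.fst))
    (hdispT : Integrable (fun x => ramp ρ (margin fstar x (am f x))) (T.map Prod.fst)) :
    (T {p : X × C | am f p.1 ≠ p.2}).toReal ≤
      (∫ p, ramp ρ (margin f p.1 p.2) ∂S)
      + (∫ p, ramp ρ (margin fstar p.1 p.2) ∂S)
      - (∫ x, ramp ρ (margin fstar x (am f x)) ∂(S.map Prod.fst))
      + (∫ x, ramp ρ (margin fstar x (am f x)) ∂(T.map Prod.fst))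
      + ∫ p, ramp ρ (margin fstar p.1 p.2) ∂T :=
  stmt5_general hρ (ham f) herrSf herrSstar herrTstar hdispS hdispT
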